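/- Let θ > 0, A ∈ ℝ^{d×d}, B ∈ ℝ^{d×m}, C ∈ ℝ^{k×d}, σ ∈ ℝ^{d×n}, R ∈ ℝ^{m×m} symmetric positive definite, and suppose there exists a symmetric positive semidefinite matrix R̃ ∈ ℝ^{m×m} with B R⁻¹ Bᵀ = 2θ σσᵀ + θ B R̃ Bᵀ. Let S : [0,T] → ℝ^{d×d} be a continuously differentiable symmetric-positive-definite-matrix-valued function satisfying (d/dt)S_t = A S_t + S_t Aᵀ + θ S_t CᵀC S_t − (1/θ)(B R⁻¹ Bᵀ − θ σσᵀ), and let ρ(t,z) := (2π)^{−d/2} (det S_t)^{−1/2} exp(−½ zᵀ S_t⁻¹ z). Then for all t ∈ [0,T] and z ∈ ℝ^d, ∂ρ/∂t (t,z) = −∇_z·( ρ(t,·) ( A(·) + (θ/2) S_t CᵀC (·) ) )(z) − ½ tr( (B R̃ Bᵀ + σσᵀ) ∇_z²ρ(t,z) ); that is, the Fokker–Planck equation of the mean-field process holds with the correction term identically zero and exploration-noise diffusion matrix B R̃ Bᵀ. -/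

import Mathlib

open Matrix

/-- Partial derivative in direction `i`. -/
noncomputable def pd {d : ℕ} (i : Fin d) (f : (Fin d → ℝ) → ℝ) (x : Fin d → ℝ) : ℝ :=
  fderiv ℝ f x (Pi.single i 1)

/-- Spatial gradient. -/
noncomputable def grad {d : ℕ} (f : (Fin d → ℝ) → ℝ) (x : Fin d → ℝ) : Fin d → ℝ :=
  fun i => pd i f x

/-- Spatial Hessian as a matrix. -/
noncomputable def hess {d : ℕ} (f : (Fin d → ℝ) → ℝ) (x : Fin d → ℝ) :
    Matrix (Fin d) (Fin d) ℝ :=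
  Matrix.of fun i j => pd i (fun y => pd j f y) x

/-- Divergence of a vector field. -/
noncomputable def dvg {d : ℕ} (v : (Fin d → ℝ) → (Fin d → ℝ)) (x : Fin d → ℝ) : ℝ :=
  ∑ i, pd i (fun y => v y i) x

/-!
Put `F = A + (θ/2) S CᵀC` and `D = B R̃ Bᵀ + σσᵀ`. The compatibility condition turns the Riccati
equation for `S` into the Lyapunov equation `S' = F S + S Fᵀ - D`. For the centred Gaussian density
`g` with covariance `S`, and `w = S⁻¹ z`, one has `∇g = -g w`, hence
`∇ · (g F z) = g (tr F - w · F z)` and `∇²g = g (w wᵀ - S⁻¹)`, while Jacobi's formula gives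
`∂ₜ g = (g/2) (w · S' w - tr (S⁻¹ S'))`. Substituting the Lyapunov equation and `S w = z` in the
last formula yields `-∇ · (g F z) - (1/2) tr (D ∇²g)`.
-/

section MatrixCurves

variable {𝕜 ι κ : Type*} [NontriviallyNormedField 𝕜] {t : 𝕜}

theorem hasDerivAt_matrix [Finite ι] [Finite κ] {M : 𝕜 → Matrix ι κ 𝕜} {M' : Matrix ι κ 𝕜} :
    HasDerivAt M M' t ↔ ∀ i j, HasDerivAt (fun s => M s i j) (M' i j) t := by
  cases nonempty_fintype κ
  exact hasDerivAt_pi.trans <| forall_congr' fun _ => hasDerivAt_pi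

variable [Fintype ι]

theorem hasDerivAt_dotProduct_mulVec [Fintype κ] {M : 𝕜 → Matrix ι κ 𝕜} {M' : Matrix ι κ 𝕜}
    (hM : HasDerivAt M M' t) (v : ι → 𝕜) (w : κ → 𝕜) :
    HasDerivAt (fun s => v ⬝ᵥ M s *ᵥ w) (v ⬝ᵥ M' *ᵥ w) t :=
  .fun_sum fun i _ => (HasDerivAt.fun_sum fun j _ =>
    (hasDerivAt_matrix.1 hM i j).mul_const (w j)).const_mul (v i)

variable [DecidableEq ι] {S : 𝕜 → Matrix ι ι 𝕜} {S' : Matrix ι ι 𝕜}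

-- Jacobi's formula: the determinant is multilinear in the rows, and replacing row `i` of `S t` by
-- row `i` of `S'` gives the `i`-th diagonal entry of `S' * adjugate (S t)`, by Cramer's rule.
theorem hasDerivAt_matrix_det (hS : HasDerivAt S S' t) :
    HasDerivAt (fun s => (S s).det) ((S t).adjugate * S').trace t := by
  let D : ContinuousMultilinearMap 𝕜 (fun _ : ι => ι → 𝕜) 𝕜 :=
    { toMultilinearMap := (detRowAlternating (R := 𝕜) (n := ι)).toMultilinearMap
      cont := Continuous.matrix_det (A := fun M : ι → ι → 𝕜 => Matrix.of M) continuous_id }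
  have hdet : HasDerivAt (fun s => (S s).det) (∑ i, ((S t).updateRow i (S' i)).det) t :=
    ((D.hasFDerivAt (x := S t)).comp_hasDerivAt t hS).congr_deriv (D.linearDeriv_apply (S t) S')
  have hrow (i : ι) : ((S t).updateRow i (S' i)).det = (S' * (S t).adjugate) i i := by
    rw [← cramer_transpose_apply, cramer_eq_adjugate_mulVec, ← adjugate_transpose, mulVec_transpose]
    rfl
  simp_rw [hrow] at hdet
  rwa [trace_mul_comm]

open scoped Matrix.Norms.Operator in
theorem hasDerivAt_matrix_inv [CompleteSpace 𝕜] (hunit : IsUnit (S t)) (hS : HasDerivAt S S' t) :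
    HasDerivAt (fun s => (S s)⁻¹) (-((S t)⁻¹ * S' * (S t)⁻¹)) t := by
  -- Completeness is needed for the uniformity of the norm, not for the product uniformity that
  -- instance search finds first.
  have : @CompleteSpace (Matrix ι ι 𝕜) PseudoMetricSpace.toUniformSpace :=
    FiniteDimensional.complete 𝕜 _
  obtain ⟨u, hu⟩ := hunit
  have hinv := hasFDerivAt_ringInverse (𝕜 := 𝕜) u
  rw [hu] at hinv
  simp_rw [nonsing_inv_eq_ringInverse]
  simpa [← hu] using! hinv.comp_hasDerivAt t hS

end MatrixCurves

section Lyapunov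

variable {R ι : Type*} [CommRing R] [Fintype ι] {S : Matrix ι ι R}

theorem dotProduct_lyapunov_mulVec (hS : S.IsSymm) (F D : Matrix ι ι R) (w : ι → R) :
    w ⬝ᵥ (F * S + S * Fᵀ - D) *ᵥ w = 2 * (w ⬝ᵥ F *ᵥ (S *ᵥ w)) - w ⬝ᵥ D *ᵥ w := by
  have hflip : w ⬝ᵥ S *ᵥ (Fᵀ *ᵥ w) = w ⬝ᵥ F *ᵥ (S *ᵥ w) := by
    rw [dotProduct_mulVec, ← mulVec_transpose S, hS.eq, mulVec_transpose, dotProduct_comm,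
      ← dotProduct_mulVec]
  rw [sub_mulVec, add_mulVec, ← mulVec_mulVec, ← mulVec_mulVec, dotProduct_sub, dotProduct_add,
    hflip, two_mul]

theorem trace_inv_mul_lyapunov [DecidableEq ι] (hS : IsUnit S.det) (F D : Matrix ι ι R) :
    (S⁻¹ * (F * S + S * Fᵀ - D)).trace = 2 * F.trace - (D * S⁻¹).trace := by
  rw [mul_sub, mul_add, nonsing_inv_mul_cancel_left _ _ hS, trace_sub, trace_add, trace_transpose,
    trace_mul_comm, mul_nonsing_inv_cancel_right _ _ hS, trace_mul_comm S⁻¹ D, two_mul]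

end Lyapunov

section SpatialCalculus

variable {d : ℕ} {f g : (Fin d → ℝ) → ℝ} {x : Fin d → ℝ}

theorem pd_mul (hf : DifferentiableAt ℝ f x) (hg : DifferentiableAt ℝ g x) (i : Fin d) :
    pd i (fun y => f y * g y) x = pd i f x * g x + f x * pd i g x := by
  simp only [pd, fderiv_fun_mul hf hg, _root_.add_apply, _root_.smul_apply, smul_eq_mul]
  ring

theorem grad_const_mul_exp_const_mul (hf : DifferentiableAt ℝ f x) (c a : ℝ) :
    grad (fun y => c * Real.exp (a * f y)) x = (c * Real.exp (a * f x) * a) • grad f x := by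
  funext i
  simp only [grad, pd, ((hf.hasFDerivAt.const_mul a).exp.const_mul c).fderiv, Pi.smul_apply,
    _root_.smul_apply, smul_eq_mul, mul_assoc]

theorem differentiable_mulVec {κ : Type*} [Finite κ] (F : Matrix κ (Fin d) ℝ) :
    Differentiable ℝ fun y => F *ᵥ y := by
  cases nonempty_fintype κ
  exact F.mulVecLin.toContinuousLinearMap.differentiable

theorem pd_mulVec_apply {κ : Type*} (F : Matrix κ (Fin d) ℝ) (i : Fin d) (j : κ) :
    pd i (fun y => (F *ᵥ y) j) x = F j i := by
  have h : HasFDerivAt (fun y => (F *ᵥ y) j)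
      (.proj j ∘L F.mulVecLin.toContinuousLinearMap) x :=
    (ContinuousLinearMap.proj j ∘L F.mulVecLin.toContinuousLinearMap).hasFDerivAt
  simp [pd, h.fderiv]

theorem dvg_mulVec (F : Matrix (Fin d) (Fin d) ℝ) : dvg (fun y => F *ᵥ y) x = F.trace :=
  Finset.sum_congr rfl fun i _ => pd_mulVec_apply F i i

theorem dvg_smul {v : (Fin d → ℝ) → Fin d → ℝ} (hf : DifferentiableAt ℝ f x)
    (hv : DifferentiableAt ℝ v x) :
    dvg (fun y => f y • v y) x = grad f x ⬝ᵥ v x + f x * dvg v x := by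
  have hterm (i : Fin d) := pd_mul hf (differentiableAt_pi.1 hv i) i
  simp only [dvg, grad, dotProduct, Pi.smul_apply, smul_eq_mul, hterm, Finset.sum_add_distrib,
    Finset.mul_sum]

theorem hess_of_grad_eq_smul_mulVec {M : Matrix (Fin d) (Fin d) ℝ} (hf : DifferentiableAt ℝ f x)
    (hgrad : ∀ y, grad f y = f y • (M *ᵥ y)) :
    hess f x = f x • (vecMulVec (M *ᵥ x) (M *ᵥ x) + Mᵀ) := by
  ext i j
  have hpd (l : Fin d) (y : Fin d → ℝ) : pd l f y = f y * (M *ᵥ y) l := congrFun (hgrad y) l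
  have hM := differentiableAt_pi.1 (differentiable_mulVec M x) j
  simp only [hess, of_apply, hpd, pd_mul hf hM, pd_mulVec_apply, Matrix.smul_apply,
    Matrix.add_apply, vecMulVec_apply, transpose_apply, smul_eq_mul]
  ring

theorem differentiable_dotProduct_mulVec_self (P : Matrix (Fin d) (Fin d) ℝ) :
    Differentiable ℝ fun y => y ⬝ᵥ P *ᵥ y := by
  unfold dotProduct mulVec dotProduct
  fun_prop

theorem grad_dotProduct_mulVec_self (P : Matrix (Fin d) (Fin d) ℝ) :
    grad (fun y => y ⬝ᵥ P *ᵥ y) x = (P + Pᵀ) *ᵥ x := by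
  funext i
  have hP (j : Fin d) := differentiableAt_pi.1 (differentiable_mulVec P x) j
  have hterm (j : Fin d) : pd i (fun y => y j * (P *ᵥ y) j) x =
      (Pi.single i 1 : Fin d → ℝ) j * (P *ᵥ x) j + x j * P j i := by
    rw [pd_mul (differentiableAt_apply j x) (hP j), pd_mulVec_apply, pd,
      (hasFDerivAt_apply j x).fderiv]
    rfl
  calc grad (fun y => y ⬝ᵥ P *ᵥ y) x i = ∑ j, pd i (fun y => y j * (P *ᵥ y) j) x := by
        simp only [grad, pd, dotProduct,
          fderiv_fun_sum fun j _ => (differentiableAt_apply j x).fun_mul (hP j), _root_.sum_apply]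
    _ = Pi.single i 1 ⬝ᵥ P *ᵥ x + x ⬝ᵥ P.col i := by
        simp only [hterm, Finset.sum_add_distrib, dotProduct, col_apply]
    _ = ((P + Pᵀ) *ᵥ x) i := by
        rw [single_one_dotProduct, dotProduct_comm, add_mulVec]
        rfl

end SpatialCalculus

/-- The density on `ℝ^d` of the centred Gaussian law with covariance matrix `S`. The formula is
read for every matrix `S`, but it is a probability density only for positive definite `S`. -/
noncomputable def gaussianDensity {d : ℕ} (S : Matrix (Fin d) (Fin d) ℝ) (z : Fin d → ℝ) : ℝ :=
  (2 * Real.pi) ^ (-(d : ℝ) / 2) * S.det ^ (-(1 : ℝ) / 2) *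
    Real.exp (-(1 / 2) * (z ⬝ᵥ S⁻¹ *ᵥ z))

namespace gaussianDensity

variable {d : ℕ}

theorem differentiable (S : Matrix (Fin d) (Fin d) ℝ) : Differentiable ℝ (gaussianDensity S) :=
  ((differentiable_dotProduct_mulVec_self S⁻¹).const_mul _).exp.const_mul _

section Space

variable {S : Matrix (Fin d) (Fin d) ℝ}

theorem grad_eq (hS : S.IsSymm) (z : Fin d → ℝ) :
    grad (gaussianDensity S) z = gaussianDensity S z • ((-S⁻¹) *ᵥ z) := by
  have hchain := grad_const_mul_exp_const_mul (differentiable_dotProduct_mulVec_self S⁻¹ z)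
    ((2 * Real.pi) ^ (-(d : ℝ) / 2) * S.det ^ (-(1 : ℝ) / 2)) (-(1 / 2))
  rw [grad_dotProduct_mulVec_self, hS.inv.eq, ← two_smul ℝ S⁻¹, smul_mulVec, smul_smul] at hchain
  refine hchain.trans ?_
  rw [neg_mulVec, smul_neg, ← neg_smul, gaussianDensity]
  congr 1
  ring

theorem dvg_smul_mulVec (hS : S.IsSymm) (F : Matrix (Fin d) (Fin d) ℝ) (z : Fin d → ℝ) :
    dvg (fun y => gaussianDensity S y • (F *ᵥ y)) z =
      gaussianDensity S z * (F.trace - S⁻¹ *ᵥ z ⬝ᵥ F *ᵥ z) := by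
  rw [dvg_smul (differentiable S z) (differentiable_mulVec F z), grad_eq hS, dvg_mulVec,
    smul_dotProduct, neg_mulVec, neg_dotProduct, smul_eq_mul]
  ring

theorem hess_eq (hS : S.IsSymm) (z : Fin d → ℝ) :
    hess (gaussianDensity S) z =
      gaussianDensity S z • (vecMulVec (S⁻¹ *ᵥ z) (S⁻¹ *ᵥ z) - S⁻¹) := by
  rw [hess_of_grad_eq_smul_mulVec (differentiable S z) (grad_eq hS), neg_mulVec, neg_vecMulVec,
    vecMulVec_neg, neg_neg, transpose_neg, hS.inv.eq, sub_eq_add_neg]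

theorem trace_mul_hess (hS : S.IsSymm) (D : Matrix (Fin d) (Fin d) ℝ) (z : Fin d → ℝ) :
    (D * hess (gaussianDensity S) z).trace =
      gaussianDensity S z * (S⁻¹ *ᵥ z ⬝ᵥ D *ᵥ (S⁻¹ *ᵥ z) - (D * S⁻¹).trace) := by
  rw [hess_eq hS, Matrix.mul_smul, trace_smul, mul_sub, trace_sub, mul_vecMulVec, trace_vecMulVec,
    dotProduct_comm, smul_eq_mul]

end Space

section Time

variable {S : ℝ → Matrix (Fin d) (Fin d) ℝ} {t : ℝ}

theorem hasDerivAt {S' : Matrix (Fin d) (Fin d) ℝ} (hdet : 0 < (S t).det)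
    (hS : HasDerivAt S S' t) (z : Fin d → ℝ) :
    HasDerivAt (fun s => gaussianDensity (S s) z)
      (gaussianDensity (S t) z *
        (1 / 2 * (z ⬝ᵥ ((S t)⁻¹ * S' * (S t)⁻¹) *ᵥ z - ((S t)⁻¹ * S').trace))) t := by
  have hquad : HasDerivAt (fun s => z ⬝ᵥ (S s)⁻¹ *ᵥ z)
      (-(z ⬝ᵥ ((S t)⁻¹ * S' * (S t)⁻¹) *ᵥ z)) t := by
    rw [← dotProduct_neg, ← neg_mulVec]
    exact hasDerivAt_dotProduct_mulVec
      (hasDerivAt_matrix_inv ((isUnit_iff_isUnit_det _).2 hdet.ne'.isUnit) hS) z z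
  have hadj : (S t).adjugate = (S t).det • (S t)⁻¹ := by
    rw [inv_def, Ring.inverse_eq_inv', smul_inv_smul₀ hdet.ne']
  have hpow : HasDerivAt (fun s => (S s).det ^ (-(1 : ℝ) / 2))
      (-(1 / 2) * (S t).det ^ (-(1 : ℝ) / 2) * ((S t)⁻¹ * S').trace) t := by
    refine ((hasDerivAt_matrix_det hS).rpow_const (Or.inl hdet.ne')).congr_deriv ?_
    rw [hadj, smul_mul, trace_smul, smul_eq_mul, Real.rpow_sub_one hdet.ne']
    field_simp
  refine ((hpow.const_mul _).fun_mul (hquad.const_mul (-(1 / 2))).exp).congr_deriv ?_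
  rw [gaussianDensity]
  ring

theorem hasDerivAt_of_lyapunov {F D : Matrix (Fin d) (Fin d) ℝ} (hsymm : (S t).IsSymm)
    (hdet : 0 < (S t).det) (hS : HasDerivAt S (F * S t + S t * Fᵀ - D) t) (z : Fin d → ℝ) :
    HasDerivAt (fun s => gaussianDensity (S s) z)
      (-dvg (fun y => gaussianDensity (S t) y • (F *ᵥ y)) z
        - 1 / 2 * (D * hess (gaussianDensity (S t)) z).trace) t := by
  have hunit : IsUnit (S t).det := hdet.ne'.isUnit
  have hquad : z ⬝ᵥ ((S t)⁻¹ * (F * S t + S t * Fᵀ - D) * (S t)⁻¹) *ᵥ z =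
      2 * ((S t)⁻¹ *ᵥ z ⬝ᵥ F *ᵥ z) - (S t)⁻¹ *ᵥ z ⬝ᵥ D *ᵥ ((S t)⁻¹ *ᵥ z) := by
    rw [← mulVec_mulVec, ← mulVec_mulVec, dotProduct_mulVec, ← mulVec_transpose, hsymm.inv.eq,
      dotProduct_lyapunov_mulVec hsymm, mulVec_mulVec z, mul_nonsing_inv _ hunit, one_mulVec]
  refine (hasDerivAt hdet hS z).congr_deriv ?_
  rw [hquad, trace_inv_mul_lyapunov hunit, dvg_smul_mulVec hsymm, trace_mul_hess hsymm]
  ring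

end Time

end gaussianDensity

theorem riccati_eq_lyapunov {𝕜 ι κ : Type*} [Field 𝕜] [NeZero (2 : 𝕜)] [Fintype ι] [Fintype κ]
    {θ : 𝕜} (hθ : θ ≠ 0) {S G V W : Matrix ι ι 𝕜} (hS : S.IsSymm)
    (hG : G = (2 * θ) • V + θ • W) (A : Matrix ι ι 𝕜) (C : Matrix κ ι 𝕜) :
    A * S + S * Aᵀ + θ • (S * (Cᵀ * C) * S) - θ⁻¹ • (G - θ • V) =
      (A + (θ / 2) • (S * (Cᵀ * C))) * S + S * (A + (θ / 2) • (S * (Cᵀ * C)))ᵀ - (W + V) := by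
  have hnoise : θ⁻¹ • (G - θ • V) = W + V := by
    rw [hG, two_mul, add_smul, add_sub_right_comm, add_sub_cancel_right, ← smul_add,
      inv_smul_smul₀ hθ, add_comm]
  have htranspose : (A + (θ / 2) • (S * (Cᵀ * C)))ᵀ = Aᵀ + (θ / 2) • (Cᵀ * C * S) := by
    rw [transpose_add, transpose_smul, transpose_mul, hS.eq, transpose_mul, transpose_transpose]
  have hhalves : θ • (S * (Cᵀ * C) * S) =
      (θ / 2) • (S * (Cᵀ * C) * S) + (θ / 2) • (S * (Cᵀ * C) * S) := by
    rw [← add_smul, add_halves]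
  rw [hnoise, htranspose, hhalves, add_mul, mul_add, smul_mul, Matrix.mul_smul,
    ← Matrix.mul_assoc S (Cᵀ * C) S]
  abel

theorem leqg_pos_correction_free_fokker_planck_general
    {d : ℕ} {m k n : Type*} [Fintype m] [Fintype k] [Fintype n] {θ t : ℝ} (hθ : θ ≠ 0)
    (A : Matrix (Fin d) (Fin d) ℝ) {B : Matrix (Fin d) m ℝ} (C : Matrix k (Fin d) ℝ)
    {σ : Matrix (Fin d) n ℝ} {Rinv Rtil : Matrix m m ℝ}
    (hcomp : B * Rinv * Bᵀ = (2 * θ) • (σ * σᵀ) + θ • (B * Rtil * Bᵀ))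
    {S : ℝ → Matrix (Fin d) (Fin d) ℝ} (hsymm : (S t).IsSymm) (hdet : 0 < (S t).det)
    (hric : HasDerivAt S (A * S t + S t * Aᵀ + θ • (S t * (Cᵀ * C) * S t)
      - θ⁻¹ • (B * Rinv * Bᵀ - θ • (σ * σᵀ))) t)
    (z : Fin d → ℝ) :
    HasDerivAt (fun s => gaussianDensity (S s) z)
      (-dvg (fun y => gaussianDensity (S t) y •
          (A *ᵥ y + (θ / 2) • ((S t * (Cᵀ * C)) *ᵥ y))) z
        - 1 / 2 * ((B * Rtil * Bᵀ + σ * σᵀ) * hess (gaussianDensity (S t)) z).trace) t := by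
  rw [riccati_eq_lyapunov hθ hsymm hcomp] at hric
  simpa only [add_mulVec, smul_mulVec] using
    gaussianDensity.hasDerivAt_of_lyapunov hsymm hdet hric z

/-- under the compatibility condition `BR⁻¹Bᵀ = 2θσσᵀ + θBR̃Bᵀ` (θ > 0),
the mean-field Fokker-Planck equation in the LEQG case holds with the correction term
identically zero and exploration-noise diffusion matrix `BR̃Bᵀ`. -/
theorem leqg_pos_correction_free_fokker_planck
    (d m k n : ℕ) (T : ℝ) (hT : 0 < T)
    (θ : ℝ) (hθ : 0 < θ)
    (A : Matrix (Fin d) (Fin d) ℝ) (B : Matrix (Fin d) (Fin m) ℝ)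
    (C : Matrix (Fin k) (Fin d) ℝ) (σ : Matrix (Fin d) (Fin n) ℝ)
    (R : Matrix (Fin m) (Fin m) ℝ) (hR : R.PosDef)
    (Rtil : Matrix (Fin m) (Fin m) ℝ) (hRtil : Rtil.PosSemidef)
    (hcomp : B * R⁻¹ * Bᵀ = (2 * θ) • (σ * σᵀ) + θ • (B * Rtil * Bᵀ))
    (S S' : ℝ → Matrix (Fin d) (Fin d) ℝ)
    (hSpd : ∀ t ∈ Set.Icc (0 : ℝ) T, (S t).PosDef)
    (hS : ∀ t ∈ Set.Icc (0 : ℝ) T, ∀ i j, HasDerivAt (fun s => S s i j) (S' t i j) t)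
    (hS'cont : ∀ i j, ContinuousOn (fun t => S' t i j) (Set.Icc (0 : ℝ) T))
    (hric : ∀ t ∈ Set.Icc (0 : ℝ) T,
      S' t = A * S t + S t * Aᵀ + θ • (S t * (Cᵀ * C) * S t)
        - θ⁻¹ • (B * R⁻¹ * Bᵀ - θ • (σ * σᵀ)))
    (ρ : ℝ → (Fin d → ℝ) → ℝ)
    (hρ : ∀ t z, ρ t z =
      (2 * Real.pi) ^ (-(d : ℝ) / 2) * (S t).det ^ (-(1 : ℝ) / 2) *
        Real.exp (-(1 / 2) * (z ⬝ᵥ (S t)⁻¹.mulVec z))) :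
    ∀ t ∈ Set.Icc (0 : ℝ) T, ∀ z,
      deriv (fun s => ρ s z) t =
        -(dvg (fun y => ρ t y •
            (A.mulVec y + (θ / 2) • ((S t * (Cᵀ * C)).mulVec y))) z)
        - (1 / 2) * ((B * Rtil * Bᵀ + σ * σᵀ) * hess (ρ t) z).trace := by
  intro t ht z
  obtain rfl : ρ = fun s => gaussianDensity (S s) := funext₂ hρ
  exact (leqg_pos_correction_free_fokker_planck_general hθ.ne' A C hcomp (hSpd t ht).isHermitian
    (hSpd t ht).det_pos (hric t ht ▸ hasDerivAt_matrix.2 (hS t ht)) z).deriv
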